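/- arXiv:2310.07838 — 2 statements merged into one kernel-verified Lean document; each statement's English description precedes it below -/
import Mathlib

section
/- There is a universal constant C > 0 with the following property. Let S and A be nonempty finite sets, ρ ∈ Δ(S), π* ∈ Δ(A|S), and let D be n i.i.d. samples from ρ×π*. Let π̂_MLE ∈ Δ(A|S) be any conditional distribution with π̂_MLE(a|s) = N((s,a),D)/N(s,D) whenever N(s,D) > 0. Then E[ TV(π̂_MLE ‖ π* | ρ) ] ≤ C·( √( ξ(π*)·|S||A| / n ) + |S|/n ), where ξ(π*) := 2·max_{s∈S} min_{a∈A} (1 − π*(a|s)). -/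
open Finset

/-- `p` is a probability distribution on the finite set `A`. -/
def IsDist {A : Type} [Fintype A] (p : A → ℝ) : Prop :=
  (∀ a, 0 ≤ p a) ∧ ∑ a, p a = 1

/-- `π` is a conditional probability distribution in `Δ(A|S)`. -/
def IsCondDist {S A : Type} [Fintype A] (π : S → A → ℝ) : Prop :=
  ∀ s, IsDist (π s)

/-- Conditional total variation `TV(π ‖ π' | ρ)`. -/
noncomputable def condTV {S A : Type} [Fintype S] [Fintype A]
    (ρ : S → ℝ) (π π' : S → A → ℝ) : ℝ :=
  ∑ s, ρ s * ((1 / 2) * ∑ a, |π s a - π' s a|)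

/-- Probability of the dataset `D` under `n` i.i.d. samples from `ρ × π`. -/
noncomputable def wt {S A : Type} {n : ℕ} (ρ : S → ℝ) (π : S → A → ℝ)
    (D : Fin n → S × A) : ℝ :=
  ∏ i, ρ (D i).1 * π (D i).1 (D i).2

/-- `N((s,a), D)`: number of occurrences of the pair `(s,a)` in the dataset `D`. -/
def cntSA {S A : Type} [DecidableEq S] [DecidableEq A] {n : ℕ}
    (D : Fin n → S × A) (s : S) (a : A) : ℕ :=
  (univ.filter fun i => D i = (s, a)).card

/-- `N(s, D)`: number of occurrences of the input `s` in the dataset `D`. -/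
def cntS {S A : Type} [DecidableEq S] {n : ℕ} (D : Fin n → S × A) (s : S) : ℕ :=
  (univ.filter fun i => (D i).1 = s).card

/-- `ξ(π*) = 2·max_{s} min_{a} (1 − π*(a|s))`. -/
noncomputable def xi {S A : Type} [Fintype S] [Fintype A] [Nonempty S] [Nonempty A]
    (πs : S → A → ℝ) : ℝ :=
  2 * (univ.sup' univ_nonempty fun s => univ.inf' univ_nonempty fun a => 1 - πs s a)

/-!
The empirical error satisfies `N(s)·|π̂(a|s) - π*(a|s)| = |Z(s,a)|`, also when `N(s) = 0`, where
`Z(s,a) := N((s,a)) - π*(a|s)·N(s)` is a sum of `n` i.i.d. centred variables of variance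
`ρ(s)·π*(a|s)·(1 - π*(a|s))`. To exchange the weight `ρ(s)` for the random `N(s)/n`, one uses
`ρ(s) ≤ 2·N(s)/n + (N(s) - n·ρ(s))²/(n²·ρ(s))`, whose last term has expectation at most `1/n`.
The Cauchy–Schwarz inequality bounds the expectation of `∑ |Z(s,a)|` by `√(|S||A|·n·ξ)`, because
`∑ₐ π*(a|s)·(1 - π*(a|s)) ≤ 2·min_a (1 - π*(a|s))`.
-/

section ProductWeights

variable {ι R : Type*} {κ : ι → Type*} [Fintype ι] [DecidableEq ι] [∀ i, Fintype (κ i)]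
  [CommSemiring R]

theorem sum_prod_mul_prod_eq_prod_sum {w : ∀ i, κ i → R}
    (hw : ∀ i, ∑ x, w i x = 1) (t : Finset ι) (g : ∀ i, κ i → R) :
    ∑ D : ∀ i, κ i, (∏ i, w i (D i)) * ∏ i ∈ t, g i (D i) = ∏ i ∈ t, ∑ x, w i x * g i x := by
  calc
    _ = ∑ D : ∀ i, κ i, ∏ i, w i (D i) * if i ∈ t then g i (D i) else 1 := by
        simp only [prod_mul_distrib, prod_ite_mem, univ_inter]
    _ = ∏ i, ∑ x, w i x * if i ∈ t then g i x else 1 :=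
        (Fintype.prod_sum fun i x => w i x * if i ∈ t then g i x else 1).symm
    _ = ∏ i, if i ∈ t then ∑ x, w i x * g i x else 1 := by
        refine prod_congr rfl fun i _ => ?_
        split_ifs <;> simp only [mul_one, hw]
    _ = _ := by simp only [prod_ite_mem, univ_inter]

theorem sum_prod_mul_sum_sq_of_centered {w f : ∀ i, κ i → R} (hw : ∀ i, ∑ x, w i x = 1)
    (hf : ∀ i, ∑ x, w i x * f i x = 0) :
    ∑ D : ∀ i, κ i, (∏ i, w i (D i)) * (∑ i, f i (D i)) ^ 2 = ∑ i, ∑ x, w i x * f i x ^ 2 := by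
  have diagonal (i : ι) : ∑ D : ∀ i, κ i, (∏ i, w i (D i)) * (f i (D i) * f i (D i)) =
      ∑ x, w i x * f i x ^ 2 := by
    simpa only [prod_singleton, ← sq] using
      sum_prod_mul_prod_eq_prod_sum hw {i} fun i x => f i x ^ 2
  have off_diagonal {i j : ι} (hij : i ≠ j) :
      ∑ D : ∀ i, κ i, (∏ i, w i (D i)) * (f i (D i) * f j (D j)) = 0 := by
    simpa only [prod_pair hij, hf, mul_zero] using sum_prod_mul_prod_eq_prod_sum hw {i, j} f
  calc
    _ = ∑ i, ∑ j, ∑ D : ∀ i, κ i, (∏ i, w i (D i)) * (f i (D i) * f j (D j)) := by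
        simp only [sq, Fintype.sum_mul_sum]
        simp only [mul_sum]
        rw [sum_comm]
        exact sum_congr rfl fun i _ => sum_comm
    _ = ∑ i, ∑ D : ∀ i, κ i, (∏ i, w i (D i)) * (f i (D i) * f i (D i)) :=
        sum_congr rfl fun i _ => Fintype.sum_eq_single i fun j hj => off_diagonal hj.symm
    _ = _ := sum_congr rfl fun i _ => diagonal i

end ProductWeights

namespace IsDist

variable {T : Type} [Fintype T] {p q : T → ℝ}

theorem pi {ι : Type} [Fintype ι] [DecidableEq ι] (hp : IsDist p) :
    IsDist fun D : ι → T => ∏ i, p (D i) := by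
  refine ⟨fun D => prod_nonneg fun i _ => hp.1 (D i), ?_⟩
  rw [← Fintype.prod_sum fun _ => p]
  simp only [hp.2, prod_const_one]

theorem le_one (hp : IsDist p) (a : T) : p a ≤ 1 :=
  hp.2 ▸ single_le_sum (fun b _ => hp.1 b) (mem_univ a)

theorem sum_abs_sub_le_two (hp : IsDist p) (hq : IsDist q) : ∑ a, |p a - q a| ≤ 2 := by
  calc
    ∑ a, |p a - q a| ≤ ∑ a, (|p a| + |q a|) := sum_le_sum fun a _ => abs_sub (p a) (q a)
    _ = 2 := by
        simp only [abs_of_nonneg (hp.1 _), abs_of_nonneg (hq.1 _), sum_add_distrib, hp.2, hq.2]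
        norm_num

theorem sum_mul_indicator_sub [DecidableEq T] (hp : IsDist p) (a : T) :
    ∑ b, p b * ((if b = a then 1 else 0) - p a) = 0 := by
  simp [mul_sub, ← sum_mul, hp.2]

theorem sum_mul_indicator_sub_sq [DecidableEq T] (hp : IsDist p) (a : T) :
    ∑ b, p b * ((if b = a then 1 else 0) - p a) ^ 2 = p a * (1 - p a) := by
  have expand (b : T) : p b * ((if b = a then 1 else 0) - p a) ^ 2 =
      (if b = a then p b * (1 - 2 * p a) else 0) + p b * p a ^ 2 := by
    split_ifs <;> ring
  simp only [expand, sum_add_distrib, sum_ite_eq', mem_univ, if_true, ← sum_mul, hp.2]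
  ring

theorem sum_mul_one_sub_le (hp : IsDist p) (b : T) :
    ∑ a, p a * (1 - p a) ≤ 2 * (1 - p b) := by
  have hsq : p b ^ 2 ≤ ∑ a, p a ^ 2 :=
    single_le_sum (f := fun a => p a ^ 2) (fun a _ => sq_nonneg (p a)) (mem_univ b)
  calc
    ∑ a, p a * (1 - p a) = 1 - ∑ a, p a ^ 2 := by
        simp only [mul_sub, mul_one, sum_sub_distrib, hp.2, sq]
    _ ≤ 2 * (1 - p b) := by linarith [sq_nonneg (1 - p b)]

theorem sum_mul_sum_abs_le_sqrt (hp : IsDist p) {J : Type*} [Fintype J] (X : T → J → ℝ) :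
    ∑ ω, p ω * ∑ j, |X ω j| ≤ √(Fintype.card J * ∑ ω, p ω * ∑ j, X ω j ^ 2) := by
  refine Real.le_sqrt_of_sq_le ?_
  calc
    (∑ ω, p ω * ∑ j, |X ω j|) ^ 2 ≤ ∑ ω, p ω * (∑ j, |X ω j|) ^ 2 :=
        Real.pow_arith_mean_le_arith_mean_pow_of_even univ p _ (fun ω _ => hp.1 ω) hp.2 even_two
    _ ≤ ∑ ω, p ω * (Fintype.card J * ∑ j, X ω j ^ 2) := by
        refine sum_le_sum fun ω _ => mul_le_mul_of_nonneg_left ?_ (hp.1 ω)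
        simpa only [sq_abs, card_univ] using
          sq_sum_le_card_mul_sum_sq (s := univ) (f := fun j => |X ω j|)
    _ = Fintype.card J * ∑ ω, p ω * ∑ j, X ω j ^ 2 := by
        simp only [mul_left_comm (p _), ← mul_sum]

end IsDist

theorem IsCondDist.sum_mul_one_sub_le_xi {S A : Type} [Fintype S] [Fintype A] [Nonempty S]
    [Nonempty A] {π : S → A → ℝ} (hπ : IsCondDist π) (s : S) :
    ∑ a, π s a * (1 - π s a) ≤ xi π := by
  obtain ⟨b, -, hb⟩ := exists_mem_eq_inf' (univ_nonempty (α := A)) fun a => 1 - π s a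
  calc
    ∑ a, π s a * (1 - π s a) ≤ 2 * (1 - π s b) := (hπ s).sum_mul_one_sub_le b
    _ = 2 * univ.inf' univ_nonempty fun a => 1 - π s a := by rw [hb]
    _ ≤ xi π := mul_le_mul_of_nonneg_left
        (le_sup' (fun s => univ.inf' univ_nonempty fun a => 1 - π s a) (mem_univ s)) zero_le_two

section SampleMoments

variable {S A : Type} [Fintype S] [Fintype A] {ρ : S → ℝ} {π : S → A → ℝ}

theorem isDist_joint (hρ : IsDist ρ) (hπ : IsCondDist π) :
    IsDist fun x : S × A => ρ x.1 * π x.1 x.2 := by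
  refine ⟨fun x => mul_nonneg (hρ.1 x.1) ((hπ x.1).1 x.2), ?_⟩
  simp only [Fintype.sum_prod_type, ← mul_sum, (hπ _).2, mul_one, hρ.2]

theorem isDist_wt (hρ : IsDist ρ) (hπ : IsCondDist π) (n : ℕ) : IsDist (wt (n := n) ρ π) :=
  (isDist_joint hρ hπ).pi

theorem sum_wt_mul_sum_sq_of_centered (hρ : IsDist ρ) (hπ : IsCondDist π) {f : S → A → ℝ}
    (hf : ∑ s, ρ s * ∑ a, π s a * f s a = 0) (n : ℕ) :
    ∑ D : Fin n → S × A, wt ρ π D * (∑ i, f (D i).1 (D i).2) ^ 2 =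
      n * ∑ s, ρ s * ∑ a, π s a * f s a ^ 2 := by
  have sum_joint (g : S → A → ℝ) :
      ∑ x : S × A, ρ x.1 * π x.1 x.2 * g x.1 x.2 = ∑ s, ρ s * ∑ a, π s a * g s a := by
    simp only [Fintype.sum_prod_type, mul_assoc, mul_sum]
  have h := sum_prod_mul_sum_sq_of_centered (fun _ : Fin n => (isDist_joint hρ hπ).2)
    fun _ => (sum_joint f).trans hf
  simpa only [wt, sum_joint fun s a => f s a ^ 2, sum_const, card_univ, Fintype.card_fin,
    nsmul_eq_mul] using h

variable [DecidableEq S]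

theorem sum_wt_mul_cntS_sub_sq (hρ : IsDist ρ) (hπ : IsCondDist π) (n : ℕ) (s : S) :
    ∑ D : Fin n → S × A, wt ρ π D * (cntS D s - n * ρ s) ^ 2 = n * (ρ s * (1 - ρ s)) := by
  have cntS_sub (D : Fin n → S × A) :
      cntS D s - n * ρ s = ∑ i, ((if (D i).1 = s then 1 else 0) - ρ s) := by
    simp [cntS, sum_sub_distrib]
  simp only [cntS_sub]
  rw [sum_wt_mul_sum_sq_of_centered hρ hπ (f := fun s' _ => (if s' = s then 1 else 0) - ρ s)]
  · simp only [← sum_mul, (hπ _).2, one_mul, hρ.sum_mul_indicator_sub_sq]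
  · simp only [← sum_mul, (hπ _).2, one_mul, hρ.sum_mul_indicator_sub]

theorem sum_wt_mul_sum_cntS_sub_sq_div_le (hρ : IsDist ρ) (hπ : IsCondDist π) (n : ℕ) :
    ∑ D : Fin n → S × A, wt ρ π D * ∑ s, (cntS D s - n * ρ s) ^ 2 / (n ^ 2 * ρ s) ≤
      Fintype.card S / n := by
  have mean_le (s : S) : n * (ρ s * (1 - ρ s)) / (n ^ 2 * ρ s) ≤ 1 / n := by
    -- Dividing by `ρ s = 0` gives `0`, so `div_self_le_one` covers inputs outside the support.
    have hone_sub : ρ s / ρ s * (1 - ρ s) ≤ 1 :=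
      mul_le_one₀ (div_self_le_one _) (sub_nonneg.mpr (hρ.le_one s)) (sub_le_self _ (hρ.1 s))
    calc
      n * (ρ s * (1 - ρ s)) / (n ^ 2 * ρ s) = n / (n * n) * (ρ s / ρ s * (1 - ρ s)) := by ring
      _ = 1 / n * (ρ s / ρ s * (1 - ρ s)) := by rw [div_self_mul_self', one_div]
      _ ≤ 1 / n := mul_le_of_le_one_right (by positivity) hone_sub
  calc
    _ = ∑ s, n * (ρ s * (1 - ρ s)) / (n ^ 2 * ρ s) := by
        simp only [mul_sum, ← mul_div_assoc]
        rw [sum_comm]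
        simp only [← sum_div, sum_wt_mul_cntS_sub_sq hρ hπ]
    _ ≤ ∑ _s : S, 1 / (n : ℝ) := sum_le_sum fun s _ => mean_le s
    _ = Fintype.card S / n := by
        rw [sum_const, card_univ, nsmul_eq_mul, mul_one_div]

variable [DecidableEq A]

theorem sum_wt_mul_cntSA_sub_sq (hρ : IsDist ρ) (hπ : IsCondDist π) (n : ℕ) (s : S) (a : A) :
    ∑ D : Fin n → S × A, wt ρ π D * (cntSA D s a - π s a * cntS D s) ^ 2 =
      n * (ρ s * (π s a * (1 - π s a))) := by
  have cntSA_sub (D : Fin n → S × A) : cntSA D s a - π s a * cntS D s =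
      ∑ i, if (D i).1 = s then (if (D i).2 = a then 1 else 0) - π s a else 0 := by
    rw [cntSA, cntS, ← sum_boole, ← sum_boole, mul_sum, ← sum_sub_distrib]
    refine sum_congr rfl fun i _ => ?_
    by_cases hs : (D i).1 = s <;> simp [Prod.ext_iff, hs]
  simp only [cntSA_sub]
  rw [sum_wt_mul_sum_sq_of_centered hρ hπ
    (f := fun s' a' => if s' = s then (if a' = a then 1 else 0) - π s a else 0)]
  · rw [Fintype.sum_eq_single s fun s' hs' => by simp [hs']]
    simp only [if_true, (hπ s).sum_mul_indicator_sub_sq]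
  · rw [Fintype.sum_eq_single s fun s' hs' => by simp [hs']]
    simp only [if_true, (hπ s).sum_mul_indicator_sub, mul_zero]

theorem sum_wt_mul_sum_cntSA_sub_sq_le [Nonempty S] [Nonempty A] (hρ : IsDist ρ)
    (hπ : IsCondDist π) (n : ℕ) :
    ∑ D : Fin n → S × A, wt ρ π D *
      ∑ x : S × A, (cntSA D x.1 x.2 - π x.1 x.2 * cntS D x.1) ^ 2 ≤ xi π * n := by
  calc
    _ = n * ∑ s, ρ s * ∑ a, π s a * (1 - π s a) := by
        simp only [mul_sum]
        rw [sum_comm, Fintype.sum_prod_type]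
        simp only [sum_wt_mul_cntSA_sub_sq hρ hπ]
    _ ≤ n * ∑ s, ρ s * xi π := by
        gcongr with s
        · exact hρ.1 s
        · exact hπ.sum_mul_one_sub_le_xi s
    _ = xi π * n := by rw [← sum_mul, hρ.2, one_mul, mul_comm]

theorem sum_wt_mul_sum_abs_cntSA_sub_le [Nonempty S] [Nonempty A] (hρ : IsDist ρ)
    (hπ : IsCondDist π) (n : ℕ) :
    ∑ D : Fin n → S × A, wt ρ π D * ∑ x : S × A, |cntSA D x.1 x.2 - π x.1 x.2 * cntS D x.1| ≤
      √(xi π * (Fintype.card S * Fintype.card A) * n) := by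
  refine ((isDist_wt hρ hπ n).sum_mul_sum_abs_le_sqrt _).trans (Real.sqrt_le_sqrt ?_)
  rw [Fintype.card_prod, Nat.cast_mul, mul_comm (xi π), mul_assoc (_ * _)]
  gcongr
  exact sum_wt_mul_sum_cntSA_sub_sq_le hρ hπ n

end SampleMoments

theorem cntSA_le_cntS {S A : Type} [DecidableEq S] [DecidableEq A] {n : ℕ} (D : Fin n → S × A)
    (s : S) (a : A) : cntSA D s a ≤ cntS D s :=
  card_le_card (monotone_filter_right _ fun _ _ h => congrArg Prod.fst h)

theorem cntS_mul_abs_sub_eq {S A : Type} [DecidableEq S] [DecidableEq A] {n : ℕ}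
    {D : Fin n → S × A} {s : S} {a : A} {x : ℝ}
    (hx : 0 < cntS D s → x = (cntSA D s a : ℝ) / cntS D s) (y : ℝ) :
    cntS D s * |x - y| = |cntSA D s a - y * cntS D s| := by
  have hcnt : cntS D s * x = cntSA D s a := by
    rcases (cntS D s).eq_zero_or_pos with hzero | hpos
    · have hpair : cntSA D s a = 0 := Nat.le_zero.mp (hzero ▸ cntSA_le_cntS D s a)
      simp [hzero, hpair]
    · rw [hx hpos]
      field_simp
  rw [← Nat.abs_cast (cntS D s), ← abs_mul, Nat.abs_cast, mul_sub, hcnt, mul_comm y]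

theorem le_two_mul_div_add_sq_div {r k n : ℝ} (hr : 0 ≤ r) (hk : 0 ≤ k) (hn : 0 < n) :
    r ≤ 2 * k / n + (k - n * r) ^ 2 / (n ^ 2 * r) := by
  rcases hr.eq_or_lt with rfl | hr
  · positivity
  · have hdiff : 2 * k / n + (k - n * r) ^ 2 / (n ^ 2 * r) - r = k ^ 2 / (n ^ 2 * r) := by
      field_simp
      ring
    rw [← sub_nonneg, hdiff]
    positivity

theorem sqrt_mul_div_self {n : ℝ} (hn : 0 ≤ n) (x : ℝ) : √(x * n) / n = √(x / n) := by
  rw [Real.sqrt_mul' x hn, Real.sqrt_div' x hn, mul_div_assoc, Real.sqrt_div_self', mul_one_div]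

theorem condTV_le_of_eq_cntSA_div_cntS {S A : Type} [Fintype S] [Fintype A] [DecidableEq S]
    [DecidableEq A] {ρ : S → ℝ} {π : S → A → ℝ} {n : ℕ} (hρ : ∀ s, 0 ≤ ρ s)
    (hπ : IsCondDist π) (hn : 0 < n) {D : Fin n → S × A} {e : S → A → ℝ}
    (he : IsCondDist e) (hmle : ∀ s a, 0 < cntS D s → e s a = (cntSA D s a : ℝ) / cntS D s) :
    condTV ρ e π ≤ (∑ x : S × A, |cntSA D x.1 x.2 - π x.1 x.2 * cntS D x.1|) / n +
      ∑ s, (cntS D s - n * ρ s) ^ 2 / (n ^ 2 * ρ s) := by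
  have hn' : (0 : ℝ) < n := Nat.cast_pos.mpr hn
  rw [Fintype.sum_prod_type, sum_div, ← sum_add_distrib]
  refine sum_le_sum fun s _ => ?_
  set L := ∑ a, |e s a - π s a| with hL
  set Q := (cntS D s - n * ρ s) ^ 2 / (n ^ 2 * ρ s)
  have hL_nonneg : 0 ≤ L := sum_nonneg fun a _ => abs_nonneg _
  have hL_le : L ≤ 2 := (he s).sum_abs_sub_le_two (hπ s)
  have hQ_nonneg : 0 ≤ Q := div_nonneg (sq_nonneg _) (mul_nonneg (sq_nonneg _) (hρ s))
  calc
    ρ s * (1 / 2 * L) ≤ (2 * cntS D s / n + Q) * (1 / 2 * L) := by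
        refine mul_le_mul_of_nonneg_right ?_ (mul_nonneg one_half_pos.le hL_nonneg)
        exact le_two_mul_div_add_sq_div (hρ s) (Nat.cast_nonneg _) hn'
    _ = cntS D s * L / n + Q * (L / 2) := by ring
    _ ≤ cntS D s * L / n + Q := by
        gcongr
        exact mul_le_of_le_one_right hQ_nonneg (by linarith)
    _ = (∑ a, |cntSA D s a - π s a * cntS D s|) / n + Q := by
        simp only [hL, mul_sum, cntS_mul_abs_sub_eq (hmle s _)]

/-- instance-dependent expected-risk upper bound for the MLE:
`E[TV(π̂_MLE ‖ π* | ρ)] ≤ C·(√(ξ(π*)·|S||A|/n) + |S|/n)` for a universal constant `C`. -/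
theorem stmt_3 :
    ∃ C : ℝ, 0 < C ∧
      ∀ (S A : Type) [Fintype S] [Fintype A] [Nonempty S] [Nonempty A]
        [DecidableEq S] [DecidableEq A]
        (ρ : S → ℝ) (πs : S → A → ℝ), IsDist ρ → IsCondDist πs →
        ∀ (n : ℕ), 0 < n →
        ∀ (est : (Fin n → S × A) → S → A → ℝ),
          (∀ D, IsCondDist (est D)) →
          (∀ D s a, 0 < cntS D s → est D s a = (cntSA D s a : ℝ) / (cntS D s : ℝ)) →
          ∑ D : Fin n → S × A, wt ρ πs D * condTV ρ (est D) πs ≤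
            C * (Real.sqrt (xi πs * (Fintype.card S * Fintype.card A : ℝ) / n) +
              (Fintype.card S : ℝ) / n) := by
  refine ⟨1, one_pos, ?_⟩
  intro S A _ _ _ _ _ _ ρ πs hρ hπ n hn est hest hmle
  calc
    ∑ D : Fin n → S × A, wt ρ πs D * condTV ρ (est D) πs
      ≤ ∑ D : Fin n → S × A, wt ρ πs D *
          ((∑ x : S × A, |cntSA D x.1 x.2 - πs x.1 x.2 * cntS D x.1|) / n +
            ∑ s, (cntS D s - n * ρ s) ^ 2 / (n ^ 2 * ρ s)) := by
        gcongr with D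
        · exact (isDist_wt hρ hπ n).1 D
        · exact condTV_le_of_eq_cntSA_div_cntS hρ.1 hπ hn (hest D) (hmle D)
    _ = (∑ D : Fin n → S × A, wt ρ πs D *
            ∑ x : S × A, |cntSA D x.1 x.2 - πs x.1 x.2 * cntS D x.1|) / n +
          ∑ D : Fin n → S × A, wt ρ πs D * ∑ s, (cntS D s - n * ρ s) ^ 2 / (n ^ 2 * ρ s) := by
        simp only [mul_add, sum_add_distrib, sum_div, mul_div_assoc]
    _ ≤ √(xi πs * (Fintype.card S * Fintype.card A) * n) / n + Fintype.card S / n := by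
        gcongr
        · exact sum_wt_mul_sum_abs_cntSA_sub_le hρ hπ n
        · exact sum_wt_mul_sum_cntS_sub_sq_div_le hρ hπ n
    _ = 1 * (√(xi πs * (Fintype.card S * Fintype.card A) / n) + Fintype.card S / n) := by
        rw [one_mul, sqrt_mul_div_self n.cast_nonneg]
end

section
/- Let S and A be nonempty finite sets with |S| ≥ 2 and |A| ≥ 2, and let n be a positive integer with n > |S| − 1. For every (possibly randomized) learner π̂ that maps the pair (D, Q) — where D ∈ (S×A)^n and Q = { (s, π*(·|s)) : s appears among s_1,…,s_n } records the full teacher distribution at every sampled input — to a conditional distribution in Δ(A|S), there exist ρ ∈ Δ(S) and π* ∈ Δ(A|S) such that, when D consists of n i.i.d. samples from ρ×π*, the expected risk satisfies E[ TV(π̂(D,Q) ‖ π* | ρ) ] ≥ (|S| − 1) / (2e(n+1)). -/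
open Finset MeasureTheory

open scoped Classical

/-- The soft-label side information `Q`: the full teacher distribution `π*(·|s)`
at every input `s` visited by the dataset `D`, and nothing elsewhere. -/
noncomputable def softLabels {S A : Type} {n : ℕ} (πs : S → A → ℝ)
    (D : Fin n → S × A) : S → Option (A → ℝ) :=
  fun s => if ∃ i, (D i).1 = s then some (πs s) else none

/-!
Let the teacher be deterministic with labels `f : S → A` drawn uniformly at random. On the event
that the sample avoids an input `s`, the learner's data are independent of `f s`, so every
prediction errs at `s` with probability `1 - 1/|A|`; the event itself has probability
`(1 - ρ s)^n`. Averaging over `f`, some deterministic teacher forces the risk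
`(1 - 1/|A|) ∑ s, ρ s * (1 - ρ s)^n`. Randomizing the learner does not help, since against a
deterministic teacher the total variation is affine in the prediction. Finally, let `ρ` put mass
`1/(n+1)` on all inputs but one.
-/

theorem sum_sum_update {ι κ M : Type*} [DecidableEq ι] [Fintype ι] [Fintype κ] [AddCommMonoid M]
    (F : (ι → κ) → M) (i : ι) :
    ∑ f, ∑ a, F (Function.update f i a) = Fintype.card κ • ∑ f, F f := by
  -- Exchanging `f i` with the new value `a` is an involution of `(ι → κ) × κ`.
  let swap : (ι → κ) × κ → (ι → κ) × κ := fun x => (Function.update x.1 i x.2, x.1 i)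
  have swap_involutive : Function.Involutive swap := fun x => by simp [swap]
  calc ∑ f, ∑ a, F (Function.update f i a) = ∑ x : (ι → κ) × κ, F (swap x).1 :=
        (Fintype.sum_prod_type fun x : (ι → κ) × κ => F (swap x).1).symm
    _ = ∑ x : (ι → κ) × κ, F x.1 := Equiv.sum_comp swap_involutive.toPerm fun x => F x.1
    _ = Fintype.card κ • ∑ f, F f := by
        simp only [Fintype.sum_prod_type, sum_const, card_univ, smul_sum]

section Distributions

variable {S A : Type} [Fintype A]

theorem IsDist.le_one_s5 {p : A → ℝ} (hp : IsDist p) (a : A) : p a ≤ 1 :=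
  hp.2 ▸ single_le_sum (fun b _ => hp.1 b) (mem_univ a)

theorem isDist_single (a : A) : IsDist (Pi.single a 1 : A → ℝ) :=
  ⟨fun b => Pi.single_nonneg (α := fun _ => ℝ).2 zero_le_one b, by simp⟩

theorem IsDist.half_sum_abs_sub_single {p : A → ℝ} (hp : IsDist p) (a : A) :
    1 / 2 * ∑ b, |p b - (Pi.single a 1 : A → ℝ) b| = 1 - p a := by
  have off_a : ∑ b ∈ univ.erase a, |p b - (Pi.single a 1 : A → ℝ) b| = 1 - p a := by
    rw [← hp.2, ← add_sum_erase _ p (mem_univ a), add_sub_cancel_left]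
    refine sum_congr rfl fun b hb => ?_
    rw [Pi.single_eq_of_ne (ne_of_mem_erase hb), sub_zero, abs_of_nonneg (hp.1 b)]
  rw [← add_sum_erase _ _ (mem_univ a), off_a, Pi.single_eq_same, abs_sub_comm,
    abs_of_nonneg (sub_nonneg.2 (hp.le_one_s5 a))]
  ring

theorem IsDist.sum_one_sub {p : A → ℝ} (hp : IsDist p) :
    ∑ a, (1 - p a) = Fintype.card A - 1 := by
  simp [hp.2]

/-- The deterministic teacher that labels every input `s` with `f s`. -/
noncomputable def detTeacher (f : S → A) : S → A → ℝ :=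
  fun s => Pi.single (f s) 1

theorem isCondDist_detTeacher (f : S → A) : IsCondDist (detTeacher f) :=
  fun s => isDist_single (f s)

theorem IsCondDist.condTV_detTeacher [Fintype S] {π : S → A → ℝ} (hπ : IsCondDist π)
    (ρ : S → ℝ) (f : S → A) : condTV ρ π (detTeacher f) = ∑ s, ρ s * (1 - π s (f s)) :=
  sum_congr rfl fun s _ => congrArg (ρ s * ·) ((hπ s).half_sum_abs_sub_single (f s))

end Distributions

section Randomization

variable {S A Ω : Type} [Fintype A] [MeasurableSpace Ω] {μ : Measure Ω}
  {X : Ω → S → A → ℝ}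

theorem integrable_apply_of_isCondDist [IsFiniteMeasure μ] (hX : Measurable X)
    (hdist : ∀ ω, IsCondDist (X ω)) (s : S) (a : A) : Integrable (fun ω => X ω s a) μ := by
  have X_measurable : Measurable fun ω => X ω s a := by fun_prop
  refine .of_bound X_measurable.aestronglyMeasurable 1 (.of_forall fun ω => ?_)
  rw [Real.norm_of_nonneg ((hdist ω s).1 a)]
  exact (hdist ω s).le_one_s5 a

theorem isCondDist_integral [IsProbabilityMeasure μ] (hX : Measurable X)
    (hdist : ∀ ω, IsCondDist (X ω)) : IsCondDist fun s a => ∫ ω, X ω s a ∂μ := by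
  refine fun s => ⟨fun a => integral_nonneg fun ω => (hdist ω s).1 a, ?_⟩
  rw [← integral_finsetSum _ fun a _ => integrable_apply_of_isCondDist hX hdist s a]
  simp [(hdist _ s).2]

theorem integral_condTV_detTeacher [Fintype S] [IsProbabilityMeasure μ] (hX : Measurable X)
    (hdist : ∀ ω, IsCondDist (X ω)) (ρ : S → ℝ) (f : S → A) :
    ∫ ω, condTV ρ (X ω) (detTeacher f) ∂μ =
      condTV ρ (fun s a => ∫ ω, X ω s a ∂μ) (detTeacher f) := by
  have X_integrable := integrable_apply_of_isCondDist (μ := μ) hX hdist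
  simp only [(hdist _).condTV_detTeacher, (isCondDist_integral hX hdist).condTV_detTeacher]
  have error_integrable (s : S) : Integrable (fun ω => 1 - X ω s (f s)) μ :=
    (integrable_const 1).sub (X_integrable s (f s))
  rw [integral_finsetSum _ fun s _ => (error_integrable s).const_mul (ρ s)]
  refine sum_congr rfl fun s _ => ?_
  rw [integral_const_mul, integral_sub (integrable_const 1) (X_integrable s (f s))]
  simp

end Randomization

section Samples

variable {S A : Type} {n : ℕ} {ρ : S → ℝ} {π π' : S → A → ℝ} {D : Fin n → S × A}

theorem wt_nonneg [Fintype A] (hρ : 0 ≤ ρ) (hπ : IsCondDist π) (D : Fin n → S × A) :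
    0 ≤ wt ρ π D :=
  prod_nonneg fun _ _ => mul_nonneg (hρ _) ((hπ _).1 _)

theorem wt_congr (h : ∀ i, π (D i).1 = π' (D i).1) : wt ρ π D = wt ρ π' D :=
  prod_congr rfl fun i _ => by rw [h i]

theorem softLabels_congr (h : ∀ i, π (D i).1 = π' (D i).1) :
    softLabels π D = softLabels π' D := by
  funext s
  simp only [softLabels]
  split_ifs with visited
  · obtain ⟨i, rfl⟩ := visited
    rw [h i]
  · rfl

theorem sum_wt_forall_mem [Fintype S] [Fintype A] (hπ : IsCondDist π) (ρ : S → ℝ) (n : ℕ)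
    (T : Finset S) :
    ∑ D : Fin n → S × A with ∀ i, (D i).1 ∈ T, wt ρ π D = (∑ s ∈ T, ρ s) ^ n := by
  have sum_row (s : S) : ∑ a, ρ s * π s a = ρ s := by rw [← mul_sum, (hπ s).2, mul_one]
  have samples_in_T : ({D | ∀ i, (D i).1 ∈ T} : Finset (Fin n → S × A)) =
      Fintype.piFinset fun _ => T ×ˢ univ := by
    ext D
    simp
  calc ∑ D : Fin n → S × A with ∀ i, (D i).1 ∈ T, wt ρ π D
      = (∑ x ∈ T ×ˢ univ, ρ x.1 * π x.1 x.2) ^ n := by rw [samples_in_T, sum_pow']; rfl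
    _ = (∑ s ∈ T, ρ s) ^ n := by simp only [sum_product, sum_row]

theorem sum_wt_forall_ne [Fintype S] [Fintype A] (hρ : ∑ s, ρ s = 1) (hπ : IsCondDist π) (n : ℕ)
    (s : S) : ∑ D : Fin n → S × A with ∀ i, (D i).1 ≠ s, wt ρ π D = (1 - ρ s) ^ n := by
  have mass_compl : ∑ t ∈ univ.erase s, ρ t = 1 - ρ s := by
    rw [sum_erase_eq_sub (mem_univ s), hρ]
  simpa [mass_compl] using sum_wt_forall_mem hπ ρ n (univ.erase s)

end Samples

section Risk

variable {S A : Type} [Fintype S] [Fintype A] {n : ℕ} {ρ : S → ℝ}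
  {g : (Fin n → S × A) → (S → Option (A → ℝ)) → S → A → ℝ}

/-- The expected risk of the non-randomized learner `g` with soft-label access to the
teacher `π`. -/
noncomputable def expectedRisk (ρ : S → ℝ) (π : S → A → ℝ)
    (g : (Fin n → S × A) → (S → Option (A → ℝ)) → S → A → ℝ) : ℝ :=
  ∑ D : Fin n → S × A, wt ρ π D * condTV ρ (g D (softLabels π D)) π

/-- The probability that a label drawn from the prediction of the learner `g` at the input `s`
differs from the label `f s` of a deterministic teacher. -/
noncomputable def expectedError (ρ : S → ℝ) (f : S → A)
    (g : (Fin n → S × A) → (S → Option (A → ℝ)) → S → A → ℝ) (s : S) : ℝ :=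
  ∑ D : Fin n → S × A,
    wt ρ (detTeacher f) D * (1 - g D (softLabels (detTeacher f) D) s (f s))

theorem expectedRisk_detTeacher (hg : ∀ D Q, IsCondDist (g D Q)) (ρ : S → ℝ) (f : S → A) :
    expectedRisk ρ (detTeacher f) g = ∑ s, ρ s * expectedError ρ f g s := by
  simp only [expectedRisk, expectedError, (hg _ _).condTV_detTeacher, mul_sum]
  rw [sum_comm]
  exact sum_congr rfl fun s _ => sum_congr rfl fun D _ => mul_left_comm _ _ _

theorem le_sum_expectedError_update (hρ : IsDist ρ) (hg : ∀ D Q, IsCondDist (g D Q))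
    (f : S → A) (s : S) :
    (Fintype.card A - 1) * (1 - ρ s) ^ n ≤
      ∑ a, expectedError ρ (Function.update f s a) g s := by
  let unseen : Finset (Fin n → S × A) := {D | ∀ i, (D i).1 ≠ s}
  let err (D : Fin n → S × A) (a : A) : ℝ := wt ρ (detTeacher (Function.update f s a)) D *
    (1 - g D (softLabels (detTeacher (Function.update f s a)) D) s a)
  have err_nonneg (D a) : 0 ≤ err D a :=
    mul_nonneg (wt_nonneg hρ.1 (isCondDist_detTeacher _) D) (sub_nonneg.2 ((hg _ _ s).le_one_s5 a))
  have err_of_unseen (D) (hD : D ∈ unseen) (a : A) :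
      err D a = wt ρ (detTeacher f) D * (1 - g D (softLabels (detTeacher f) D) s a) := by
    have same_labels (i) :
        detTeacher (Function.update f s a) (D i).1 = detTeacher f (D i).1 := by
      simp only [detTeacher, Function.update_of_ne ((mem_filter.1 hD).2 i)]
    simp only [err, wt_congr same_labels, softLabels_congr same_labels]
  calc (Fintype.card A - 1) * (1 - ρ s) ^ n
      = ∑ D ∈ unseen, wt ρ (detTeacher f) D * (Fintype.card A - 1) := by
        rw [← sum_wt_forall_ne hρ.2 (isCondDist_detTeacher f), mul_comm, sum_mul]
    _ = ∑ D ∈ unseen, ∑ a, err D a := by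
        refine sum_congr rfl fun D hD => ?_
        simp only [err_of_unseen D hD, ← mul_sum, (hg _ _ s).sum_one_sub]
    _ ≤ ∑ D, ∑ a, err D a :=
        sum_le_univ_sum_of_nonneg fun D => sum_nonneg fun a _ => err_nonneg D a
    _ = ∑ a, expectedError ρ (Function.update f s a) g s := by
        rw [sum_comm]
        simp only [err, expectedError, Function.update_self]

theorem le_sum_expectedError [Nonempty A] (hρ : IsDist ρ) (hg : ∀ D Q, IsCondDist (g D Q))
    (s : S) :
    Fintype.card (S → A) * ((1 - (Fintype.card A : ℝ)⁻¹) * (1 - ρ s) ^ n) ≤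
      ∑ f, expectedError ρ f g s := by
  have card_pos : (0 : ℝ) < Fintype.card A := by exact_mod_cast Fintype.card_pos
  refine le_of_mul_le_mul_left ?_ card_pos
  calc Fintype.card A * (Fintype.card (S → A) * ((1 - (Fintype.card A : ℝ)⁻¹) * (1 - ρ s) ^ n))
      = ∑ _f : S → A, (Fintype.card A - 1) * (1 - ρ s) ^ n := by
        rw [sum_const, card_univ, nsmul_eq_mul]
        field_simp
    _ ≤ ∑ f : S → A, ∑ a, expectedError ρ (Function.update f s a) g s :=
        sum_le_sum fun f _ => le_sum_expectedError_update hρ hg f s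
    _ = Fintype.card A * ∑ f, expectedError ρ f g s := by
        rw [sum_sum_update fun f => expectedError ρ f g s, nsmul_eq_mul]

theorem exists_le_expectedRisk_detTeacher [Nonempty A] (hρ : IsDist ρ)
    (hg : ∀ D Q, IsCondDist (g D Q)) :
    ∃ f : S → A, (1 - (Fintype.card A : ℝ)⁻¹) * ∑ s, ρ s * (1 - ρ s) ^ n ≤
      expectedRisk ρ (detTeacher f) g := by
  set bound := (1 - (Fintype.card A : ℝ)⁻¹) * ∑ s, ρ s * (1 - ρ s) ^ n with bound_def
  have average_le : ∑ _f : S → A, bound ≤ ∑ f, expectedRisk ρ (detTeacher f) g :=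
    calc ∑ _f : S → A, bound
        = ∑ s, ρ s *
            (Fintype.card (S → A) * ((1 - (Fintype.card A : ℝ)⁻¹) * (1 - ρ s) ^ n)) := by
          rw [sum_const, card_univ, nsmul_eq_mul, bound_def, mul_sum, mul_sum]
          exact sum_congr rfl fun s _ => by ring
      _ ≤ ∑ s, ρ s * ∑ f, expectedError ρ f g s := sum_le_sum fun s _ =>
          mul_le_mul_of_nonneg_left (le_sum_expectedError hρ hg s) (hρ.1 s)
      _ = ∑ f, expectedRisk ρ (detTeacher f) g := by
          simp only [expectedRisk_detTeacher hg, mul_sum]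
          exact sum_comm
  obtain ⟨f, -, hf⟩ := exists_le_of_sum_le univ_nonempty average_le
  exact ⟨f, hf⟩

theorem exists_le_sum_integral_condTV_detTeacher [Nonempty A] {Ω : Type} [MeasurableSpace Ω]
    {μ : Measure Ω} [IsProbabilityMeasure μ]
    {est : (Fin n → S × A) → (S → Option (A → ℝ)) → Ω → S → A → ℝ}
    (hρ : IsDist ρ) (hmeas : ∀ D Q, Measurable (est D Q))
    (hdist : ∀ D Q ω, IsCondDist (est D Q ω)) :
    ∃ f : S → A, (1 - (Fintype.card A : ℝ)⁻¹) * ∑ s, ρ s * (1 - ρ s) ^ n ≤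
      ∑ D, wt ρ (detTeacher f) D *
        ∫ ω, condTV ρ (est D (softLabels (detTeacher f) D) ω) (detTeacher f) ∂μ := by
  simp only [integral_condTV_detTeacher (hmeas _ _) (hdist _ _)]
  exact exists_le_expectedRisk_detTeacher hρ
    (g := fun D Q s a => ∫ ω, est D Q ω s a ∂μ) fun D Q =>
      isCondDist_integral (hmeas D Q) (hdist D Q)

end Risk

section SpikedDistribution

variable {S : Type} [Fintype S]

/-- The distribution with mass `ε` at every input except `s₀`, which carries the remaining mass. -/
noncomputable def spikedDist (s₀ : S) (ε : ℝ) : S → ℝ :=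
  fun s => if s = s₀ then 1 - (Fintype.card S - 1) * ε else ε

theorem sum_erase_comp_spikedDist (s₀ : S) (ε : ℝ) (φ : ℝ → ℝ) :
    ∑ s ∈ univ.erase s₀, φ (spikedDist s₀ ε s) = (Fintype.card S - 1) * φ ε := by
  have off_spike : ∀ s ∈ univ.erase s₀, φ (spikedDist s₀ ε s) = φ ε := fun s hs => by
    rw [spikedDist, if_neg (ne_of_mem_erase hs)]
  rw [sum_congr rfl off_spike, sum_const, nsmul_eq_mul, cast_card_erase_of_mem (mem_univ s₀),
    card_univ]

theorem isDist_spikedDist (s₀ : S) {ε : ℝ} (hε : 0 ≤ ε) (hmass : (Fintype.card S - 1) * ε ≤ 1) :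
    IsDist (spikedDist s₀ ε) := by
  refine ⟨fun s => ?_, ?_⟩
  · rw [spikedDist]
    split_ifs
    exacts [sub_nonneg.2 hmass, hε]
  · rw [← add_sum_erase _ _ (mem_univ s₀), sum_erase_comp_spikedDist s₀ ε fun x => x, spikedDist,
      if_pos rfl]
    ring

theorem le_sum_spikedDist_mul_pow (s₀ : S) {ε : ℝ} (hε : 0 ≤ ε)
    (hmass : (Fintype.card S - 1) * ε ≤ 1) (n : ℕ) :
    (Fintype.card S - 1) * (ε * (1 - ε) ^ n) ≤
      ∑ s, spikedDist s₀ ε s * (1 - spikedDist s₀ ε s) ^ n := by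
  have hρ := isDist_spikedDist s₀ hε hmass
  rw [← sum_erase_comp_spikedDist s₀ ε fun x => x * (1 - x) ^ n]
  exact sum_le_univ_sum_of_nonneg fun s =>
    mul_nonneg (hρ.1 s) (pow_nonneg (sub_nonneg.2 (hρ.le_one_s5 s)) n)

end SpikedDistribution

theorem inv_exp_one_le_one_sub_inv_pow (n : ℕ) :
    (Real.exp 1)⁻¹ ≤ (1 - ((n : ℝ) + 1)⁻¹) ^ n := by
  rcases n.eq_zero_or_pos with rfl | n_pos
  · simpa using inv_le_one_of_one_le₀ (Real.one_le_exp zero_le_one)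
  have eq_inv : 1 - ((n : ℝ) + 1)⁻¹ = (1 + (n : ℝ)⁻¹)⁻¹ := by
    field_simp
    ring
  rw [eq_inv, inv_pow]
  exact inv_anti₀ (by positivity) Real.one_add_inv_pow_le_exp

theorem half_le_one_sub_inv {m : ℕ} (hm : 2 ≤ m) : 1 / 2 ≤ 1 - (m : ℝ)⁻¹ := by
  have inv_le_half : (m : ℝ)⁻¹ ≤ 2⁻¹ := inv_anti₀ two_pos (by exact_mod_cast hm)
  linarith

theorem stmt_5_general (S A : Type) [Fintype S] [Nonempty S] [Fintype A] [Nonempty A]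
    (n : ℕ) (hn : (Fintype.card S : ℝ) - 1 ≤ n + 1)
    (Ω : Type) [MeasurableSpace Ω] (μ : Measure Ω) [IsProbabilityMeasure μ]
    (est : (Fin n → S × A) → (S → Option (A → ℝ)) → Ω → S → A → ℝ)
    (hmeas : ∀ D Q, Measurable (est D Q))
    (hdist : ∀ D Q ω, IsCondDist (est D Q ω)) :
    ∃ ρ : S → ℝ, ∃ πs : S → A → ℝ,
      IsDist ρ ∧ IsCondDist πs ∧
      (1 - (Fintype.card A : ℝ)⁻¹) *
          (((Fintype.card S : ℝ) - 1) / (Real.exp 1 * (n + 1))) ≤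
        ∑ D : Fin n → S × A, wt ρ πs D *
          ∫ ω, condTV ρ (est D (softLabels πs D) ω) πs ∂μ := by
  obtain ⟨s₀⟩ := ‹Nonempty S›
  have card_S_sub_one_nonneg : 0 ≤ (Fintype.card S : ℝ) - 1 :=
    sub_nonneg.2 (by exact_mod_cast Fintype.card_pos_iff.2 ⟨s₀⟩)
  have mass_le_one : ((Fintype.card S : ℝ) - 1) * ((n : ℝ) + 1)⁻¹ ≤ 1 :=
    mul_inv_le_one_of_le₀ hn n.cast_add_one_pos.le
  have ρ_dist := isDist_spikedDist s₀ (inv_nonneg.2 n.cast_add_one_pos.le) mass_le_one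
  obtain ⟨f, hf⟩ := exists_le_sum_integral_condTV_detTeacher (μ := μ) ρ_dist hmeas hdist
  refine ⟨_, detTeacher f, ρ_dist, isCondDist_detTeacher f, le_trans ?_ hf⟩
  refine mul_le_mul_of_nonneg_left ?_ (sub_nonneg.2 (Nat.cast_inv_le_one _))
  calc ((Fintype.card S : ℝ) - 1) / (Real.exp 1 * (n + 1))
      = (Fintype.card S - 1) * (((n : ℝ) + 1)⁻¹ * (Real.exp 1)⁻¹) := by field_simp
    _ ≤ (Fintype.card S - 1) * (((n : ℝ) + 1)⁻¹ * (1 - ((n : ℝ) + 1)⁻¹) ^ n) := by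
        gcongr
        exact inv_exp_one_le_one_sub_inv_pow n
    _ ≤ _ := le_sum_spikedDist_mul_pow s₀ (by positivity) mass_le_one n

/-- minimax lower bound `(|S|−1)/(2e(n+1))` for transfer via full
soft labels at every visited input. -/
theorem stmt_5 (S A : Type) [Fintype S] [Fintype A]
    (hS : 2 ≤ Fintype.card S) (hA : 2 ≤ Fintype.card A)
    (n : ℕ) (hn : (Fintype.card S : ℝ) - 1 < n)
    (Ω : Type) [MeasurableSpace Ω] (μ : Measure Ω) [IsProbabilityMeasure μ]
    (est : (Fin n → S × A) → (S → Option (A → ℝ)) → Ω → S → A → ℝ)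
    (hmeas : ∀ D Q, Measurable (est D Q))
    (hdist : ∀ D Q ω, IsCondDist (est D Q ω)) :
    ∃ ρ : S → ℝ, ∃ πs : S → A → ℝ,
      IsDist ρ ∧ IsCondDist πs ∧
      ((Fintype.card S : ℝ) - 1) / (2 * Real.exp 1 * (n + 1)) ≤
        ∑ D : Fin n → S × A, wt ρ πs D *
          ∫ ω, condTV ρ (est D (softLabels πs D) ω) πs ∂μ := by
  have : Nontrivial S := Fintype.one_lt_card_iff_nontrivial.1 hS
  have : Nontrivial A := Fintype.one_lt_card_iff_nontrivial.1 hA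
  obtain ⟨ρ, πs, hρ, hπs, h⟩ := stmt_5_general S A n (by linarith) Ω μ est hmeas hdist
  have card_S_sub_one_nonneg : 0 ≤ (Fintype.card S : ℝ) - 1 :=
    sub_nonneg.2 (by exact_mod_cast Fintype.card_pos)
  refine ⟨ρ, πs, hρ, hπs, le_trans ?_ h⟩
  calc ((Fintype.card S : ℝ) - 1) / (2 * Real.exp 1 * (n + 1))
      = 1 / 2 * (((Fintype.card S : ℝ) - 1) / (Real.exp 1 * (n + 1))) := by field_simp
    _ ≤ _ := mul_le_mul_of_nonneg_right (half_le_one_sub_inv hA) (by positivity)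
end
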